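/- Let k ∈ ℕ, let μ be a finite complex Borel measure on ℝ, ε ∈ (0,1], n, m ∈ ℤ≥0, and u(x) = x - i. Then there exists a finite complex Borel measure ν with total variation ‖ν‖ ≤ ‖|u|^{-1-ε}‖_{L¹(ℝ)}·‖μ‖ such that ∫_ℝ g^{(n)} u^m dμ = ∫_ℝ g^{(n+k)} u^{m+k+ε} dν for every g ∈ C^{n+k}(ℝ) satisfying g^{(n+l)}u^{m+l} ∈ C₀(ℝ) for l = 0,…,k-1 and g^{(n+k)}u^{m+k-1} ∈ L¹(ℝ). -/

import Mathlib

open Complex MeasureTheory Filter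

/-! Let `k = p + 1`. Expanding at `t` and evaluating at `x`, the Taylor polynomial of `f` of degree
`p` has `t`-derivative `(x - t)^p / p! * f^{(p+1)}(t)`, equals `f x` at `t = x`, and tends to `0` as
`|t| → ∞`. Integrating from `x` to infinity, away from the origin, writes `f x` as an integral of
`f^{(p+1)}` against a kernel `K(x, t)` which is bounded by `|t|^p` and lives on `|x| ≤ |t|`.
By Fubini, `∫ f u^m dμ = ∫ f^{(p+1)} h dt` with `h(t) = ∫ K(x, t) u(x)^m dμ(x)`. On the support of
the kernel `|u(x)| ≤ |u(t)|`, so `|h| ≤ |u|^{m+p} ‖μ‖`, and dividing `h` by `u^{m+p+1+ε}` leaves a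
density bounded by `|u|^{-1-ε} ‖μ‖`.

For `k = 0` it suffices to divide by `u^ε`: the constant is at least `1`, because
`∫ |u|^{-1-ε} ≥ ∫ |u|^{-2} = π`. -/

section PolarDecomposition

variable {α 𝕜 : Type*} [MeasurableSpace α] [RCLike 𝕜] {μ : Measure α} {τ : α → 𝕜}

theorem exists_isFiniteMeasure_integral_mul_eq (hτ : Integrable τ μ) :
    ∃ (ν : Measure α) (_ : IsFiniteMeasure ν) (σ : α → 𝕜), Integrable σ ν ∧
      ∫ x, ‖σ x‖ ∂ν = ∫ x, ‖τ x‖ ∂μ ∧ ∀ φ : α → 𝕜, ∫ x, φ x * σ x ∂ν = ∫ x, φ x * τ x ∂μ := by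
  let σ : α → 𝕜 := fun x => τ x / (‖τ x‖ : 𝕜)
  have nnnorm_smul_σ (x) : ‖τ x‖₊ • σ x = τ x := by
    rcases eq_or_ne (τ x) 0 with h | h
    · simp [h]
    · rw [NNReal.smul_def, coe_nnnorm, RCLike.real_smul_eq_coe_mul]
      exact mul_div_cancel₀ _ (by simpa using h)
  have hσ_meas : AEStronglyMeasurable σ μ :=
    hτ.1.div₀ (RCLike.continuous_ofReal.comp_aestronglyMeasurable hτ.1.norm)
  have hσ_le (x) : ‖σ x‖ ≤ 1 := by
    simpa [σ] using div_self_le_one ‖τ x‖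
  have hν : IsFiniteMeasure (μ.withDensity fun x => (‖τ x‖₊ : ENNReal)) :=
    isFiniteMeasure_withDensity hτ.2.ne
  refine ⟨_, hν, σ, .of_bound (hσ_meas.mono_ac (withDensity_absolutelyContinuous _ _)) 1
    (ae_of_all _ hσ_le), ?_, fun φ => ?_⟩ <;>
  rw [integral_withDensity_eq_integral_smul₀ hτ.1.aemeasurable.nnnorm] <;>
  congr with x
  · simpa only [NNReal.smul_def, coe_nnnorm, norm_smul, norm_norm, smul_eq_mul]
      using congrArg norm (nnnorm_smul_σ x)
  · rw [← mul_smul_comm, nnnorm_smul_σ]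

end PolarDecomposition

section TaylorKernel

open Set Topology Asymptotics
open scoped Nat

/-- The kernel recovering a function that decays at infinity from its derivative of order `p + 1`:
the Taylor remainder kernel `(x - t)^p / p!`, cut off to the half-line of `t` that starts at `x` and
points away from the origin, and signed by its orientation. -/
noncomputable def taylorKernel (p : ℕ) (x t : ℝ) : ℝ :=
  if 0 ≤ x then (Ioi x).indicator (fun s => -((p ! : ℝ)⁻¹ * (x - s) ^ p)) t
  else (Iic x).indicator (fun s => (p ! : ℝ)⁻¹ * (x - s) ^ p) t

theorem measurable_taylorKernel (p : ℕ) :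
    Measurable fun z : ℝ × ℝ => taylorKernel p z.1 z.2 := by
  simp only [taylorKernel, indicator_apply, mem_Ioi, mem_Iic]
  refine .ite (measurableSet_le measurable_const measurable_fst)
    (.ite (measurableSet_lt measurable_fst measurable_snd) ?_ measurable_const)
    (.ite (measurableSet_le measurable_snd measurable_fst) ?_ measurable_const) <;>
  fun_prop

theorem taylorKernel_eq_zero_of_abs_lt {p : ℕ} {x t : ℝ} (h : |t| < |x|) :
    taylorKernel p x t = 0 := by
  rw [taylorKernel]
  split_ifs with hx
  · exact indicator_of_notMem (by grind) _
  · exact indicator_of_notMem (by grind) _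

theorem abs_taylorKernel_le (p : ℕ) (x t : ℝ) : |taylorKernel p x t| ≤ |t| ^ p := by
  have monomial_le (h : |x - t| ≤ |t|) : |(p ! : ℝ)⁻¹ * (x - t) ^ p| ≤ |t| ^ p := by
    rw [abs_mul, abs_inv, Nat.abs_cast, abs_pow]
    exact (mul_le_of_le_one_left (by positivity) (Nat.cast_inv_le_one _)).trans (by gcongr)
  simp only [taylorKernel, indicator_apply, mem_Ioi, mem_Iic]
  split_ifs with hx ht ht
  · rw [abs_neg]
    exact monomial_le (by grind)
  · rw [abs_zero]
    positivity
  · exact monomial_le (by grind)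
  · rw [abs_zero]
    positivity

theorem abs_taylorKernel_mul_le {w : ℝ → ℝ} (hw : ∀ x, 0 ≤ w x)
    (hw_mono : ∀ x t, |x| ≤ |t| → w x ≤ w t) (p : ℕ) (x t : ℝ) :
    |taylorKernel p x t| * w x ≤ |t| ^ p * w t := by
  rcases le_or_gt |x| |t| with hxt | hxt
  · exact mul_le_mul (abs_taylorKernel_le p x t) (hw_mono x t hxt) (hw x) (by positivity)
  · rw [taylorKernel_eq_zero_of_abs_lt hxt, abs_zero, zero_mul]
    exact mul_nonneg (by positivity) (hw t)

variable {E : Type*} [NormedAddCommGroup E] [NormedSpace ℝ E] {p : ℕ} {f : ℝ → E}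

theorem hasDerivAt_taylorWithinEval_univ (hf : ContDiff ℝ (p + 1) f) (x t : ℝ) :
    HasDerivAt (fun s => taylorWithinEval f p univ s x)
      (((p ! : ℝ)⁻¹ * (x - t) ^ p) • iteratedDeriv (p + 1) f t) t := by
  rw [← hasDerivWithinAt_univ, ← iteratedDerivWithin_univ]
  refine hasDerivWithinAt_taylorWithinEval uniqueDiffOn_univ univ_mem (mem_univ t) Subset.rfl
    (hf.of_le (by simp)).contDiffOn ?_
  rw [iteratedDerivWithin_univ]
  exact (hf.differentiable_iteratedDeriv p (mod_cast p.lt_succ_self) t).differentiableWithinAt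

theorem tendsto_taylorWithinEval_cocompact
    (hlim : ∀ j ≤ p, Tendsto (fun t => t ^ j • iteratedDeriv j f t) (cocompact ℝ) (𝓝 0)) (x : ℝ) :
    Tendsto (fun t => taylorWithinEval f p univ t x) (cocompact ℝ) (𝓝 0) := by
  simp_rw [taylor_within_apply, iteratedDerivWithin_univ]
  rw [← Finset.sum_const_zero (s := Finset.range (p + 1)) (ι := ℕ)]
  refine tendsto_finsetSum _ fun j hj => ?_
  have sub_isBigO : (fun t => x - t) =O[cocompact ℝ] id := by
    rw [← Metric.cobounded_eq_cocompact]
    exact (isLittleO_const_id_cobounded x).isBigO.sub (isBigO_refl _ _)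
  exact (((sub_isBigO.pow j).const_mul_left _).smul (isBigO_refl _ _)).trans_tendsto
    (hlim j (Finset.mem_range_succ_iff.mp hj))

theorem integrable_taylorKernel_smul {F : ℝ → E} (hF : AEStronglyMeasurable F)
    (hint : Integrable fun t => t ^ p • F t) (x : ℝ) :
    Integrable fun t => taylorKernel p x t • F t := by
  refine hint.mono
    (((measurable_taylorKernel p).comp measurable_prodMk_left).aestronglyMeasurable.smul hF)
    (ae_of_all _ fun t => ?_)
  rw [norm_smul, norm_smul, Real.norm_eq_abs, norm_pow, Real.norm_eq_abs]
  gcongr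
  exact abs_taylorKernel_le p x t

theorem integral_taylorKernel_smul_iteratedDeriv [CompleteSpace E] (hf : ContDiff ℝ (p + 1) f)
    (hlim : ∀ j ≤ p, Tendsto (fun t => t ^ j • iteratedDeriv j f t) (cocompact ℝ) (𝓝 0))
    (hint : Integrable fun t => t ^ p • iteratedDeriv (p + 1) f t) (x : ℝ) :
    ∫ t, taylorKernel p x t • iteratedDeriv (p + 1) f t = f x := by
  have hderiv := hasDerivAt_taylorWithinEval_univ hf x
  have hzero := tendsto_taylorWithinEval_cocompact hlim x
  rw [cocompact_eq_atBot_atTop] at hzero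
  have hker := integrable_taylorKernel_smul
    (hf.continuous_iteratedDeriv (p + 1) le_rfl).aestronglyMeasurable hint x
  rcases le_or_gt 0 x with hx | hx
  · simp only [taylorKernel, if_pos hx, ← indicator_smul_apply_left, neg_smul] at hker ⊢
    have hker : IntegrableOn _ (Ioi x) := (integrable_indicator_iff measurableSet_Ioi).mp hker
    rw [integral_indicator measurableSet_Ioi, integral_neg,
      integral_Ioi_of_hasDerivAt_of_tendsto' (fun t _ => hderiv t) (integrable_neg_iff.mp hker)
        (hzero.mono_left le_sup_right), taylorWithinEval_self, zero_sub, neg_neg]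
  · simp only [taylorKernel, if_neg hx.not_ge, ← indicator_smul_apply_left] at hker ⊢
    rw [integral_indicator measurableSet_Iic,
      integral_Iic_of_hasDerivAt_of_tendsto' (fun t _ => hderiv t)
        ((integrable_indicator_iff measurableSet_Iic).mp hker)
        (hzero.mono_left le_sup_left), taylorWithinEval_self, sub_zero]

end TaylorKernel

section TransferDensity

open Topology

variable {𝕜 : Type*} [RCLike 𝕜] {μ : Measure ℝ} {v ρ : ℝ → 𝕜}

/-- The Lebesgue density of the measure that, paired with `f^{(p+1)}`, gives the same value as
`φ dμ` paired with `f`. Up to sign, it is an iterated antiderivative of `φ dμ` of order `p + 1`. -/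
noncomputable def transferDensity (p : ℕ) (μ : Measure ℝ) (φ : ℝ → 𝕜) (t : ℝ) : 𝕜 :=
  ∫ x, taylorKernel p x t • φ x ∂μ

theorem aestronglyMeasurable_taylorKernel_smul [SFinite μ] (p : ℕ) {φ : ℝ → 𝕜}
    (hφ : AEStronglyMeasurable φ μ) :
    AEStronglyMeasurable (fun z : ℝ × ℝ => taylorKernel p z.2 z.1 • φ z.2) (volume.prod μ) :=
  ((measurable_taylorKernel p).comp measurable_swap).aestronglyMeasurable.smul hφ.comp_snd

theorem aestronglyMeasurable_transferDensity [SFinite μ] (p : ℕ) {φ : ℝ → 𝕜}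
    (hφ : AEStronglyMeasurable φ μ) : AEStronglyMeasurable (transferDensity p μ φ) :=
  (aestronglyMeasurable_taylorKernel_smul p hφ).integral_prod_right'

theorem norm_taylorKernel_smul_mul_le (hv_mono : ∀ x t, |x| ≤ |t| → ‖v x‖ ≤ ‖v t‖) (p : ℕ)
    (x t : ℝ) (z : 𝕜) : ‖taylorKernel p x t • (v x * z)‖ ≤ |t| ^ p * ‖v t‖ * ‖z‖ := by
  rw [norm_smul, norm_mul, Real.norm_eq_abs, ← mul_assoc]
  gcongr ?_ * _
  exact abs_taylorKernel_mul_le (fun _ => norm_nonneg _) hv_mono p x t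

theorem norm_transferDensity_le (hρ : Integrable ρ μ)
    (hv_mono : ∀ x t, |x| ≤ |t| → ‖v x‖ ≤ ‖v t‖) (p : ℕ) (t : ℝ) :
    ‖transferDensity p μ (fun x => v x * ρ x) t‖ ≤ |t| ^ p * ‖v t‖ * ∫ x, ‖ρ x‖ ∂μ := by
  rw [← integral_const_mul]
  exact norm_integral_le_of_norm_le (hρ.norm.const_mul _)
    (ae_of_all _ fun x => norm_taylorKernel_smul_mul_le hv_mono p x t (ρ x))

theorem integral_mul_eq_integral_iteratedDeriv_mul_transferDensity [SFinite μ]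
    (hρ : Integrable ρ μ) (hv : AEStronglyMeasurable v μ)
    (hv_mono : ∀ x t, |x| ≤ |t| → ‖v x‖ ≤ ‖v t‖)
    {p : ℕ} {f : ℝ → 𝕜} (hf : ContDiff ℝ (p + 1) f)
    (hlim : ∀ j ≤ p, Tendsto (fun t => t ^ j • iteratedDeriv j f t) (cocompact ℝ) (𝓝 0))
    (hint : Integrable fun t => t ^ p • iteratedDeriv (p + 1) f t)
    (hint_v : Integrable fun t => t ^ p • (iteratedDeriv (p + 1) f t * v t)) :
    ∫ x, f x * (v x * ρ x) ∂μ =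
      ∫ t, iteratedDeriv (p + 1) f t * transferDensity p μ (fun x => v x * ρ x) t := by
  have hcont := hf.continuous_iteratedDeriv (p + 1) le_rfl
  have hprod : Integrable (fun z : ℝ × ℝ =>
      iteratedDeriv (p + 1) f z.1 * taylorKernel p z.2 z.1 • (v z.2 * ρ z.2))
      (volume.prod μ) := by
    refine (hint_v.mul_prod hρ).mono
      ((hcont.comp continuous_fst).aestronglyMeasurable.mul
        (aestronglyMeasurable_taylorKernel_smul p (hv.mul hρ.1)))
      (ae_of_all _ fun z => ?_)
    calc _ ≤ ‖iteratedDeriv (p + 1) f z.1‖ * (|z.1| ^ p * ‖v z.1‖ * ‖ρ z.2‖) := by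
          rw [norm_mul]
          gcongr
          exact norm_taylorKernel_smul_mul_le hv_mono p z.2 z.1 (ρ z.2)
      _ = _ := by
          simp only [norm_mul, norm_smul, norm_pow, Real.norm_eq_abs]
          ring
  calc ∫ x, f x * (v x * ρ x) ∂μ
      = ∫ x, ∫ t, iteratedDeriv (p + 1) f t * taylorKernel p x t • (v x * ρ x) ∂volume ∂μ := by
        congr with x
        rw [← integral_taylorKernel_smul_iteratedDeriv hf hlim hint x, ← integral_mul_const]
        simp only [smul_mul_assoc, mul_smul_comm]
    _ = ∫ t, ∫ x, iteratedDeriv (p + 1) f t * taylorKernel p x t • (v x * ρ x) ∂μ :=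
        (integral_integral_swap hprod).symm
    _ = _ := by
        simp only [integral_const_mul, transferDensity]

end TransferDensity

section Weight

open Topology

theorem norm_ofReal_sub_I (x : ℝ) : ‖(x : ℂ) - I‖ = √(1 + x ^ 2) := by
  rw [norm_def, normSq_apply]
  simp [← sq, add_comm]

theorem one_le_norm_ofReal_sub_I (x : ℝ) : 1 ≤ ‖(x : ℂ) - I‖ := by
  simpa using abs_im_le_norm ((x : ℂ) - I)

theorem abs_le_norm_ofReal_sub_I (x : ℝ) : |x| ≤ ‖(x : ℂ) - I‖ := by
  simpa using abs_re_le_norm ((x : ℂ) - I)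

theorem norm_ofReal_sub_I_pos (x : ℝ) : 0 < ‖(x : ℂ) - I‖ :=
  one_pos.trans_le (one_le_norm_ofReal_sub_I x)

theorem norm_ofReal_sub_I_pow_mono (m : ℕ) (x t : ℝ) (h : |x| ≤ |t|) :
    ‖((x : ℂ) - I) ^ m‖ ≤ ‖((t : ℂ) - I) ^ m‖ := by
  rw [norm_pow, norm_pow, norm_ofReal_sub_I, norm_ofReal_sub_I]
  gcongr √(1 + ?_) ^ m
  exact sq_le_sq.mpr h

theorem abs_pow_mul_norm_le (p m : ℕ) (t : ℝ) :
    |t| ^ p * ‖((t : ℂ) - I) ^ m‖ ≤ ‖((t : ℂ) - I) ^ (m + p)‖ := by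
  rw [pow_add, norm_mul, mul_comm, norm_pow _ p]
  gcongr
  exact abs_le_norm_ofReal_sub_I t

theorem abs_pow_le_norm_pow_add (p m : ℕ) (t : ℝ) : |t| ^ p ≤ ‖((t : ℂ) - I) ^ (m + p)‖ := by
  refine (le_mul_of_one_le_right (by positivity) ?_).trans (abs_pow_mul_norm_le p m t)
  simpa only [norm_pow] using one_le_pow₀ (one_le_norm_ofReal_sub_I t)

theorem integrable_norm_ofReal_sub_I_rpow {ε : ℝ} (hε : 0 < ε) :
    Integrable fun x : ℝ => ‖(x : ℂ) - I‖ ^ (-(1 + ε)) := by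
  refine (integrable_rpow_neg_one_add_norm_sq (E := ℝ) (μ := volume) (r := 1 + ε)
    (by simpa using hε)).congr (ae_of_all _ fun x => ?_)
  simp only [norm_ofReal_sub_I, Real.norm_eq_abs, sq_abs]
  rw [Real.sqrt_eq_rpow, ← Real.rpow_mul (by positivity)]
  ring_nf

theorem one_le_integral_norm_ofReal_sub_I_rpow {ε : ℝ} (hε0 : 0 < ε) (hε1 : ε ≤ 1) :
    1 ≤ ∫ x : ℝ, ‖(x : ℂ) - I‖ ^ (-(1 + ε)) := by
  have inv_le (x : ℝ) : (1 + x ^ 2)⁻¹ ≤ ‖(x : ℂ) - I‖ ^ (-(1 + ε)) :=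
    calc (1 + x ^ 2)⁻¹ = ‖(x : ℂ) - I‖ ^ (-2 : ℝ) := by
          rw [Real.rpow_neg (norm_nonneg _), Real.rpow_two, norm_ofReal_sub_I,
            Real.sq_sqrt (by positivity)]
      _ ≤ _ := Real.rpow_le_rpow_of_exponent_le (one_le_norm_ofReal_sub_I x) (by linarith)
  calc (1 : ℝ) ≤ ∫ x : ℝ, (1 + x ^ 2)⁻¹ := by
        rw [integral_univ_inv_one_add_sq]
        linarith [Real.pi_gt_three]
    _ ≤ _ := integral_mono integrable_inv_one_add_sq (integrable_norm_ofReal_sub_I_rpow hε0) inv_le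

theorem ofReal_sub_I_ne_zero (x : ℝ) : (x : ℂ) - I ≠ 0 :=
  norm_pos_iff.mp (norm_ofReal_sub_I_pos x)

theorem ofReal_sub_I_cpow_ne_zero (x : ℝ) (z : ℂ) : ((x : ℂ) - I) ^ z ≠ 0 :=
  fun h => ofReal_sub_I_ne_zero x ((cpow_eq_zero_iff _ _).mp h).1

theorem norm_div_ofReal_sub_I_cpow_le {ε : ℝ} (hε : 0 ≤ ε) (x : ℝ) (z : ℂ) :
    ‖z / ((x : ℂ) - I) ^ (ε : ℂ)‖ ≤ ‖z‖ := by
  rw [norm_div, norm_cpow_real]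
  exact div_le_self (norm_nonneg _) (Real.one_le_rpow (one_le_norm_ofReal_sub_I x) hε)

variable {μ : Measure ℝ} {ρ : ℝ → ℂ}

theorem integrable_div_ofReal_sub_I_cpow (hρ : Integrable ρ μ) {ε : ℝ} (hε : 0 ≤ ε) :
    Integrable (fun x : ℝ => ρ x / ((x : ℂ) - I) ^ (ε : ℂ)) μ :=
  hρ.mono (hρ.1.div₀ (Measurable.aestronglyMeasurable (by fun_prop)))
    (ae_of_all _ fun x => norm_div_ofReal_sub_I_cpow_le hε x (ρ x))

theorem integral_mul_pow_eq_integral_iteratedDeriv_mul_transferDensity [SFinite μ]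
    (hρ : Integrable ρ μ) {p m : ℕ} {f : ℝ → ℂ} (hf : ContDiff ℝ (p + 1) f)
    (hlim : ∀ j ≤ p, Tendsto (fun x : ℝ => iteratedDeriv j f x * ((x : ℂ) - I) ^ (m + j))
      (cocompact ℝ) (𝓝 0))
    (hint : Integrable fun x : ℝ => iteratedDeriv (p + 1) f x * ((x : ℂ) - I) ^ (m + p)) :
    ∫ x, f x * (((x : ℂ) - I) ^ m * ρ x) ∂μ =
      ∫ t, iteratedDeriv (p + 1) f t *
        transferDensity p μ (fun x => ((x : ℂ) - I) ^ m * ρ x) t := by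
  have norm_smul_le (j : ℕ) (t : ℝ) (z : ℂ) : ‖t ^ j • z‖ ≤ ‖z * ((t : ℂ) - I) ^ (m + j)‖ := by
    rw [norm_smul, norm_mul, norm_pow, Real.norm_eq_abs, mul_comm]
    gcongr
    exact abs_pow_le_norm_pow_add j m t
  have hcont := hf.continuous_iteratedDeriv (p + 1) le_rfl
  refine integral_mul_eq_integral_iteratedDeriv_mul_transferDensity hρ (by fun_prop)
    (norm_ofReal_sub_I_pow_mono m) hf (fun j hj => ?_) ?_ ?_
  · exact squeeze_zero_norm (fun t => norm_smul_le j t _) (by simpa using (hlim j hj).norm)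
  · exact hint.mono ((continuous_pow p).smul hcont).aestronglyMeasurable
      (ae_of_all _ fun t => norm_smul_le p t _)
  · refine hint.mono ((continuous_pow p).smul (hcont.mul (by fun_prop))).aestronglyMeasurable
      (ae_of_all _ fun t => ?_)
    rw [norm_smul, norm_mul, norm_mul, norm_pow, Real.norm_eq_abs, mul_left_comm]
    gcongr
    exact abs_pow_mul_norm_le p m t

theorem norm_transferDensity_div_le (hρ : Integrable ρ μ) (p m : ℕ) (ε t : ℝ) :
    ‖transferDensity p μ (fun x => ((x : ℂ) - I) ^ m * ρ x) t /
        (((t : ℂ) - I) ^ (m + (p + 1)) * ((t : ℂ) - I) ^ (ε : ℂ))‖ ≤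
      ‖(t : ℂ) - I‖ ^ (-(1 + ε)) * ∫ x, ‖ρ x‖ ∂μ := by
  have hpos := norm_ofReal_sub_I_pos t
  have hbound : ‖transferDensity p μ (fun x => ((x : ℂ) - I) ^ m * ρ x) t‖ ≤
      ‖(t : ℂ) - I‖ ^ (m + p) * ∫ x, ‖ρ x‖ ∂μ := by
    refine (norm_transferDensity_le hρ (norm_ofReal_sub_I_pow_mono m) p t).trans ?_
    gcongr
    simpa only [norm_pow] using abs_pow_mul_norm_le p m t
  rw [norm_div, norm_mul, norm_cpow_real, norm_pow, Real.rpow_neg hpos.le, Real.rpow_add hpos,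
    Real.rpow_one, ← add_assoc, pow_succ, mul_assoc, div_le_iff₀ (by positivity)]
  refine hbound.trans_eq ?_
  field_simp

theorem integrable_transferDensity_div [SFinite μ] (hρ : Integrable ρ μ) (p m : ℕ) {ε : ℝ}
    (hε : 0 < ε) :
    Integrable fun t : ℝ => transferDensity p μ (fun x => ((x : ℂ) - I) ^ m * ρ x) t /
      (((t : ℂ) - I) ^ (m + (p + 1)) * ((t : ℂ) - I) ^ (ε : ℂ)) := by
  refine ((integrable_norm_ofReal_sub_I_rpow hε).mul_const (∫ x, ‖ρ x‖ ∂μ)).mono' ?_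
    (ae_of_all _ fun t => norm_transferDensity_div_le hρ p m ε t)
  have hφ : AEStronglyMeasurable (fun x : ℝ => ((x : ℂ) - I) ^ m * ρ x) μ :=
    AEStronglyMeasurable.mul (by fun_prop) hρ.1
  have hu : Measurable fun t : ℝ => ((t : ℂ) - I) ^ (m + (p + 1)) * ((t : ℂ) - I) ^ (ε : ℂ) := by
    fun_prop
  exact (aestronglyMeasurable_transferDensity p hφ).div₀ hu.aestronglyMeasurable

end Weight

theorem contDiff_iteratedDeriv {𝕜 E : Type*} [NontriviallyNormedField 𝕜] [NormedAddCommGroup E]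
    [NormedSpace 𝕜 E] {n k : ℕ} {g : 𝕜 → E} (hg : ContDiff 𝕜 (n + k : ℕ) g) :
    ContDiff 𝕜 k (iteratedDeriv n g) := by
  rw [iteratedDeriv_eq_iterate]
  exact ContDiff.iterate_deriv' k n (by rwa [add_comm])

theorem iteratedDeriv_iteratedDeriv {𝕜 E : Type*} [NontriviallyNormedField 𝕜]
    [NormedAddCommGroup E] [NormedSpace 𝕜 E] (n j : ℕ) (g : 𝕜 → E) :
    iteratedDeriv j (iteratedDeriv n g) = iteratedDeriv (n + j) g := by
  simp only [iteratedDeriv_eq_iterate, ← Function.iterate_add_apply, add_comm]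

/-- Let `k ∈ ℕ`, `μ` a finite complex Borel measure on `ℝ` (encoded by a
finite positive measure `μ` with integrable complex density `ρ`), `ε ∈ (0,1]`,
`n, m ∈ ℤ≥0`, `u(x) = x - i`. There exists a finite complex measure `ν` (with density `σ`)
of total variation `‖ν‖ ≤ ‖|u|^{-1-ε}‖_{L¹(ℝ)}·‖μ‖` such that
`∫ g^{(n)} u^m dμ = ∫ g^{(n+k)} u^{m+k+ε} dν` for every `g ∈ C^{n+k}(ℝ)` with
`g^{(n+l)}u^{m+l} ∈ C₀(ℝ)` for `l = 0,…,k-1` and `g^{(n+k)}u^{m+k-1} ∈ L¹(ℝ)`;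
here `u^ε` denotes the continuous branch `x ↦ (x-i)^ε` on `ℝ`. -/
theorem partial_integration_with_weight
    (k : ℕ) (ε : ℝ) (hε0 : 0 < ε) (hε1 : ε ≤ 1) (n m : ℕ)
    (μ : Measure ℝ) [IsFiniteMeasure μ] (ρ : ℝ → ℂ) (hρ : Integrable ρ μ) :
    ∃ (ν : Measure ℝ) (_ : IsFiniteMeasure ν) (σ : ℝ → ℂ),
      Integrable σ ν ∧
      (∫ x, ‖σ x‖ ∂ν) ≤ (∫ x : ℝ, ‖(x : ℂ) - I‖ ^ (-(1 + ε))) * (∫ x, ‖ρ x‖ ∂μ) ∧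
      ∀ g : ℝ → ℂ, ContDiff ℝ (n + k : ℕ) g →
        (∀ l : ℕ, l < k →
          Tendsto (fun x : ℝ => iteratedDeriv (n + l) g x * ((x : ℂ) - I) ^ (m + l))
            (cocompact ℝ) (nhds 0)) →
        Integrable
          (fun x : ℝ => iteratedDeriv (n + k) g x * ((x : ℂ) - I) ^ ((m : ℤ) + k - 1))
          volume →
        ∫ x, iteratedDeriv n g x * ((x : ℂ) - I) ^ m * ρ x ∂μ
          = ∫ x, iteratedDeriv (n + k) g x * ((x : ℂ) - I) ^ (m + k) *
              ((x : ℂ) - I) ^ (ε : ℂ) * σ x ∂ν := by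
  obtain _ | p := k
  · have hσ := integrable_div_ofReal_sub_I_cpow hρ hε0.le
    have hσ_le (x : ℝ) := norm_div_ofReal_sub_I_cpow_le hε0.le x (ρ x)
    refine ⟨μ, inferInstance, _, hσ, ?_, fun g _ _ _ => ?_⟩
    · exact (integral_mono hσ.norm hρ.norm hσ_le).trans (le_mul_of_one_le_left (by positivity)
        (one_le_integral_norm_ofReal_sub_I_rpow hε0 hε1))
    · simp only [add_zero, mul_assoc, mul_div_cancel₀ _ (ofReal_sub_I_cpow_ne_zero _ _)]
  · have hτ := integrable_transferDensity_div hρ p m hε0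
    obtain ⟨ν, hν, σ, hσ, hσ_norm, integral_σ⟩ := exists_isFiniteMeasure_integral_mul_eq hτ
    refine ⟨ν, hν, σ, hσ, ?_, fun g hg hlim hint => ?_⟩
    · rw [hσ_norm, ← integral_mul_const]
      exact integral_mono hτ.norm ((integrable_norm_ofReal_sub_I_rpow hε0).mul_const _)
        (norm_transferDensity_div_le hρ p m ε)
    · have hexp : (m : ℤ) + (p + 1 : ℕ) - 1 = (m + p : ℕ) := by push_cast; ring
      have weight_ne (t : ℝ) : ((t : ℂ) - I) ^ (m + (p + 1)) * ((t : ℂ) - I) ^ (ε : ℂ) ≠ 0 :=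
        mul_ne_zero (pow_ne_zero _ (ofReal_sub_I_ne_zero t)) (ofReal_sub_I_cpow_ne_zero t ε)
      simp only [hexp, zpow_natCast, ← iteratedDeriv_iteratedDeriv n] at hint hlim ⊢
      rw [integral_σ]
      simpa only [mul_assoc (iteratedDeriv _ _ _), mul_div_cancel₀ _ (weight_ne _)] using
        integral_mul_pow_eq_integral_iteratedDeriv_mul_transferDensity hρ
          (contDiff_iteratedDeriv hg) (fun j hj => hlim j (Nat.lt_succ_of_le hj)) hint
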